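/- Let S be a set equipped with a distinguished element 0 and a binary operation − ("subtraction") satisfying: (i) x − x = 0 for all x ∈ S; (ii) x − 0 = x for all x ∈ S; and (iii) (z − x) − (y − x) = z − y for all x, y, z ∈ S. Then S carries a group structure whose zero element is 0 and whose group subtraction (i.e. a·b^{-1}, written additively a + (−b)) coincides with the given operation −. -/

import Mathlib

/-- A pointed set `(S, z)` with a binary operation `sub` satisfying
`x − x = 0`, `x − 0 = x` and `(z − x) − (y − x) = z − y` carries an (additive,
not necessarily commutative) group structure whose zero element is `z` and whose
subtraction `a - b = a + (-b)` coincides with `sub`. -/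
theorem group_from_subtraction {S : Type*} (z : S) (sub : S → S → S)
    (h1 : ∀ x, sub x x = z)
    (h2 : ∀ x, sub x z = x)
    (h3 : ∀ x y w, sub (sub w x) (sub y x) = sub w y) :
    ∃ G : AddGroup S,
      (letI := G; ((0 : S) = z ∧ ∀ a b : S, a - b = sub a b)) := by
  have hN : ∀ x y, sub z (sub y x) = sub x y := fun x y => by
    have h := h3 x y x
    rwa [h1] at h
  have hNN : ∀ x, sub z (sub z x) = x := fun x => by rw [hN, h2]
  have hA : ∀ a b c, sub (sub a (sub z b)) (sub z c) =
      sub a (sub z (sub b (sub z c))) := fun a b c => by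
    rw [hN]
    have e : sub (sub (sub z c) b) (sub z b) = sub z c := by rw [h3, h2]
    have h := h3 (sub z b) (sub (sub z c) b) a
    rwa [e] at h
  let G : AddGroup S :=
    { add := fun a b => sub a (sub z b)
      zero := z
      neg := fun a => sub z a
      sub := sub
      add_assoc := hA
      zero_add := hNN
      add_zero := fun a => show sub a (sub z z) = a by rw [h1, h2]
      neg_add_cancel := fun a => h1 (sub z a)
      sub_eq_add_neg := fun a b => show sub a b = sub a (sub z (sub z b)) by rw [hNN]
      nsmul := @nsmulRec S ⟨z⟩ ⟨fun a b => sub a (sub z b)⟩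
      zsmul := @zsmulRec S ⟨z⟩ ⟨fun a b => sub a (sub z b)⟩ ⟨fun a => sub z a⟩
        (@nsmulRec S ⟨z⟩ ⟨fun a b => sub a (sub z b)⟩) }
  exact ⟨G, rfl, fun _ _ => rfl⟩
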